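/- Let A and B be real N×N matrices and c ∈ ℝ, b ≥ 0 with μ₂[A] ≤ c and ‖B‖₂ ≤ b. Let Δt > 0 satisfy (c + b)Δt < 2. Then I − (Δt/2)A is invertible and any vectors satisfying the fixed-point error recursion ε_ℓ = (Δt/2)(I − (Δt/2)A)^{−1} B ε_{ℓ−1} obey ‖ε_ℓ‖₂ ≤ Θ·‖ε_{ℓ−1}‖₂ with Θ = ((Δt/2)b)/(1 − (Δt/2)c) < 1; hence the iteration converges in the ℓ2-norm. -/

import Mathlib

open Matrix

/-- The Euclidean (ℓ2) norm of a vector. -/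
noncomputable def l2norm {n : Type*} [Fintype n] (v : n → ℝ) : ℝ :=
  Real.sqrt (∑ i, (v i)^2)

/-!
The bound `Re ⟪A v, v⟫ ≤ c ‖v‖²`, which says `μ₂[A] ≤ c`, makes `M = I - hA` coercive with constant
`1 - hc`, where `h = Δt / 2`. By Lax–Milgram `M` is invertible, and by Cauchy–Schwarz
`‖M⁻¹‖ ≤ 1 / (1 - hc)`, so one step of the iteration contracts by `hb / (1 - hc)`.
-/

open Filter Topology RCLike WithLp
open scoped InnerProductSpace Ring

theorem map_ringInverse_of_mulEquiv {M₀ N₀ F : Type*} [MonoidWithZero M₀] [MonoidWithZero N₀]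
    [EquivLike F M₀ N₀] [MulEquivClass F M₀ N₀] (e : F) (a : M₀) : e a⁻¹ʳ = (e a)⁻¹ʳ := by
  by_cases ha : IsUnit a
  · apply (ha.map e).mul_left_cancel
    rw [← map_mul, Ring.mul_inverse_cancel _ ha, Ring.mul_inverse_cancel _ (ha.map e), map_one]
  · rw [Ring.inverse_non_unit _ ha, Ring.inverse_non_unit _ (by rwa [isUnit_map_iff]), map_zero]

theorem tendsto_zero_of_norm_succ_le {E : Type*} [SeminormedAddCommGroup E] {x : ℕ → E} {θ : ℝ}
    (hθ₀ : 0 ≤ θ) (hθ₁ : θ < 1) (hx : ∀ n, ‖x (n + 1)‖ ≤ θ * ‖x n‖) :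
    Tendsto x atTop (𝓝 0) := by
  have hgeom : Tendsto (fun n ↦ θ ^ n * ‖x 0‖) atTop (𝓝 0) := by
    simpa only [zero_mul] using (tendsto_pow_atTop_nhds_zero_of_lt_one hθ₀ hθ₁).mul_const ‖x 0‖
  exact squeeze_zero_norm (fun n ↦ le_geom (u := (‖x ·‖)) hθ₀ n fun k _ ↦ hx k) hgeom

section Resolvent

variable {𝕜 E : Type*} [RCLike 𝕜] [NormedAddCommGroup E] [InnerProductSpace 𝕜 E]

theorem mul_norm_le_norm_of_mul_norm_sq_le_re_inner {m : ℝ} {v w : E}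
    (h : m * ‖v‖ ^ 2 ≤ re ⟪w, v⟫_𝕜) : m * ‖v‖ ≤ ‖w‖ := by
  rcases eq_or_ne v 0 with rfl | hv
  · simp only [norm_zero, mul_zero, norm_nonneg]
  · refine le_of_mul_le_mul_right ?_ (norm_pos_iff.mpr hv)
    calc m * ‖v‖ * ‖v‖ = m * ‖v‖ ^ 2 := by ring
      _ ≤ re ⟪w, v⟫_𝕜 := h
      _ ≤ ‖w‖ * ‖v‖ := re_inner_le_norm w v

variable {A : E →L[𝕜] E} {c h : ℝ}

theorem mul_norm_sq_le_re_inner_one_sub_smul (hh : 0 ≤ h)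
    (hA : ∀ v, re ⟪A v, v⟫_𝕜 ≤ c * ‖v‖ ^ 2) (v : E) :
    (1 - h * c) * ‖v‖ ^ 2 ≤ re ⟪(1 - (h : 𝕜) • A) v, v⟫_𝕜 := by
  have hre : re ⟪(1 - (h : 𝕜) • A) v, v⟫_𝕜 = ‖v‖ ^ 2 - h * re ⟪A v, v⟫_𝕜 := by
    simp only [_root_.sub_apply, one_apply_eq_self, _root_.smul_apply, inner_sub_left,
      inner_smul_left, conj_ofReal, map_sub, re_ofReal_mul, inner_self_eq_norm_sq]
  linarith [mul_le_mul_of_nonneg_left (hA v) hh]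

variable [CompleteSpace E]

theorem isUnit_one_sub_smul_of_re_inner_le (hh : 0 ≤ h) (hhc : h * c < 1)
    (hA : ∀ v, re ⟪A v, v⟫_𝕜 ≤ c * ‖v‖ ^ 2) : IsUnit (1 - (h : 𝕜) • A) := by
  have hm : 0 < 1 - h * c := sub_pos.mpr hhc
  refine ContinuousLinearMap.isUnit_of_forall_le_norm_inner_map (c := ⟨1 - h * c, hm.le⟩) _ hm
    fun v ↦ ?_
  calc ‖v‖ ^ 2 * (1 - h * c) = (1 - h * c) * ‖v‖ ^ 2 := mul_comm _ _
    _ ≤ re ⟪(1 - (h : 𝕜) • A) v, v⟫_𝕜 := mul_norm_sq_le_re_inner_one_sub_smul hh hA v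
    _ ≤ ‖⟪(1 - (h : 𝕜) • A) v, v⟫_𝕜‖ := re_le_norm _

theorem norm_ringInverse_one_sub_smul_apply_le (hh : 0 ≤ h) (hhc : h * c < 1)
    (hA : ∀ v, re ⟪A v, v⟫_𝕜 ≤ c * ‖v‖ ^ 2) (w : E) :
    ‖(1 - (h : 𝕜) • A)⁻¹ʳ w‖ ≤ ‖w‖ / (1 - h * c) := by
  set M := 1 - (h : 𝕜) • A
  have hM : M (M⁻¹ʳ w) = w := by
    rw [← mul_apply_eq_comp,
      Ring.mul_inverse_cancel M (isUnit_one_sub_smul_of_re_inner_le hh hhc hA), one_apply_eq_self]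
  rw [le_div_iff₀' (sub_pos.mpr hhc)]
  calc (1 - h * c) * ‖M⁻¹ʳ w‖ ≤ ‖M (M⁻¹ʳ w)‖ :=
        mul_norm_le_norm_of_mul_norm_sq_le_re_inner (mul_norm_sq_le_re_inner_one_sub_smul hh hA _)
    _ = ‖w‖ := by rw [hM]

theorem norm_smul_ringInverse_one_sub_smul_apply_le {B : E → E} {b : ℝ}
    (hh : 0 ≤ h) (hhc : h * c < 1) (hA : ∀ v, re ⟪A v, v⟫_𝕜 ≤ c * ‖v‖ ^ 2)
    (hB : ∀ v, ‖B v‖ ≤ b * ‖v‖) (v : E) :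
    ‖(h : 𝕜) • (1 - (h : 𝕜) • A)⁻¹ʳ (B v)‖ ≤ h * b / (1 - h * c) * ‖v‖ := by
  have hresolvent : ‖(1 - (h : 𝕜) • A)⁻¹ʳ (B v)‖ ≤ b * ‖v‖ / (1 - h * c) :=
    (norm_ringInverse_one_sub_smul_apply_le hh hhc hA (B v)).trans
      (div_le_div_of_nonneg_right (hB v) (sub_nonneg.mpr hhc.le))
  calc ‖(h : 𝕜) • (1 - (h : 𝕜) • A)⁻¹ʳ (B v)‖ = h * ‖(1 - (h : 𝕜) • A)⁻¹ʳ (B v)‖ := by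
        rw [norm_smul, norm_of_nonneg hh]
    _ ≤ h * (b * ‖v‖ / (1 - h * c)) := mul_le_mul_of_nonneg_left hresolvent hh
    _ = h * b / (1 - h * c) * ‖v‖ := by ring

theorem cnfi_fixed_point_convergence_l2_general (A : E →L[𝕜] E) (B : E → E) {c b : ℝ} (hb : 0 ≤ b)
    (hA : ∀ v, re ⟪A v, v⟫_𝕜 ≤ c * ‖v‖ ^ 2) (hB : ∀ v, ‖B v‖ ≤ b * ‖v‖)
    {Δt : ℝ} (hΔt : 0 < Δt) (hcb : (c + b) * Δt < 2) :
    IsUnit (1 - ((Δt / 2 : ℝ) : 𝕜) • A) ∧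
    Δt / 2 * b / (1 - Δt / 2 * c) < 1 ∧
    ∀ ε : ℕ → E,
      (∀ ℓ, 1 ≤ ℓ →
        ε ℓ = ((Δt / 2 : ℝ) : 𝕜) • (1 - ((Δt / 2 : ℝ) : 𝕜) • A)⁻¹ʳ (B (ε (ℓ - 1)))) →
      (∀ ℓ, 1 ≤ ℓ → ‖ε ℓ‖ ≤ Δt / 2 * b / (1 - Δt / 2 * c) * ‖ε (ℓ - 1)‖) ∧
      Tendsto ε atTop (𝓝 0) := by
  have hh : 0 ≤ Δt / 2 := by positivity
  have hhb : 0 ≤ Δt / 2 * b := by positivity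
  have hhc : Δt / 2 * c < 1 := by linarith
  have hm : 0 < 1 - Δt / 2 * c := sub_pos.mpr hhc
  have hΘ : Δt / 2 * b / (1 - Δt / 2 * c) < 1 := by
    rw [div_lt_one hm]
    linarith
  refine ⟨isUnit_one_sub_smul_of_re_inner_le hh hhc hA, hΘ, fun ε hε ↦ ?_⟩
  have hcontr : ∀ ℓ, 1 ≤ ℓ → ‖ε ℓ‖ ≤ Δt / 2 * b / (1 - Δt / 2 * c) * ‖ε (ℓ - 1)‖ := by
    intro ℓ hℓ
    rw [hε ℓ hℓ]
    exact norm_smul_ringInverse_one_sub_smul_apply_le hh hhc hA hB _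
  exact ⟨hcontr, tendsto_zero_of_norm_succ_le (by positivity) hΘ
    fun ℓ ↦ hcontr (ℓ + 1) ℓ.succ_pos⟩

end Resolvent

section Euclidean

variable {n : Type*} [Fintype n]

theorem l2norm_eq_norm_toLp (v : n → ℝ) : l2norm v = ‖toLp 2 v‖ := by
  simp only [l2norm, EuclideanSpace.norm_eq, Real.norm_eq_abs, sq_abs]

theorem dotProduct_eq_inner_toLp (v w : n → ℝ) : v ⬝ᵥ w = ⟪toLp 2 v, toLp 2 w⟫_ℝ :=
  dotProduct_comm v w

variable {𝕜 : Type*} [RCLike 𝕜] [DecidableEq n]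

theorem toEuclideanCLM_one_sub_smul (A : Matrix n n 𝕜) (h : 𝕜) :
    toEuclideanCLM (𝕜 := 𝕜) (1 - h • A) = 1 - h • toEuclideanCLM (𝕜 := 𝕜) A := by
  rw [map_sub, map_one, map_smul]

theorem toLp_inv_mulVec (M : Matrix n n 𝕜) (v : n → 𝕜) :
    toLp 2 (M⁻¹ *ᵥ v) = (toEuclideanCLM (𝕜 := 𝕜) M)⁻¹ʳ (toLp 2 v) := by
  rw [← toEuclideanCLM_toLp, nonsing_inv_eq_ringInverse, map_ringInverse_of_mulEquiv]

end Euclidean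

/-- Let A, B be real N×N matrices, c ∈ ℝ, b ≥ 0 with μ₂[A] ≤ c and
‖B‖₂ ≤ b, and let Δt > 0 satisfy (c + b)Δt < 2.  Then I − (Δt/2)A is invertible
and any vectors satisfying the fixed-point error recursion
ε_ℓ = (Δt/2)(I − (Δt/2)A)⁻¹ B ε_{ℓ−1} obey ‖ε_ℓ‖₂ ≤ Θ‖ε_{ℓ−1}‖₂ with
Θ = ((Δt/2)b)/(1 − (Δt/2)c) < 1; hence the iteration converges in the ℓ2-norm. -/
theorem cnfi_fixed_point_convergence_l2
    (N : ℕ) (A B : Matrix (Fin N) (Fin N) ℝ) (c b : ℝ) (hb : 0 ≤ b)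
    (hA : ∀ v : Fin N → ℝ, (A.mulVec v) ⬝ᵥ v ≤ c * (v ⬝ᵥ v))
    (hB : ∀ v : Fin N → ℝ, l2norm (B.mulVec v) ≤ b * l2norm v)
    (Δt : ℝ) (hΔt : 0 < Δt) (hcb : (c + b) * Δt < 2) :
    IsUnit (1 - (Δt/2) • A) ∧
    ((Δt/2) * b) / (1 - (Δt/2) * c) < 1 ∧
    ∀ ε : ℕ → Fin N → ℝ,
      (∀ ℓ : ℕ, 1 ≤ ℓ →
        ε ℓ = (Δt/2) • ((1 - (Δt/2) • A)⁻¹).mulVec (B.mulVec (ε (ℓ - 1)))) →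
      (∀ ℓ : ℕ, 1 ≤ ℓ →
        l2norm (ε ℓ) ≤ (((Δt/2) * b) / (1 - (Δt/2) * c)) * l2norm (ε (ℓ - 1))) ∧
      Filter.Tendsto (fun ℓ => ε ℓ) Filter.atTop (nhds 0) := by
  simp only [l2norm_eq_norm_toLp, dotProduct_eq_inner_toLp, real_inner_self_eq_norm_sq] at hA hB ⊢
  obtain ⟨hunit, hΘ, hconv⟩ := cnfi_fixed_point_convergence_l2_general (𝕜 := ℝ)
    (toEuclideanCLM (𝕜 := ℝ) A) (toEuclideanCLM (𝕜 := ℝ) B) hb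
    (fun v ↦ hA (ofLp v)) (fun v ↦ hB (ofLp v)) hΔt hcb
  simp only [ofReal_real_eq_id, id_eq, ← toEuclideanCLM_one_sub_smul] at hunit hconv
  refine ⟨(isUnit_map_iff _ _).mp hunit, hΘ, fun ε hε ↦ ?_⟩
  obtain ⟨hcontr, hlim⟩ := hconv (fun ℓ ↦ toLp 2 (ε ℓ)) fun ℓ hℓ ↦ by
    rw [hε ℓ hℓ, toLp_smul, toLp_inv_mulVec, toEuclideanCLM_toLp]
  exact ⟨hcontr, ((PiLp.continuous_ofLp 2 _).tendsto 0).comp hlim⟩
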